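/- arXiv:math/0209109 — 3 statements merged into one kernel-verified Lean document; each statement's English description precedes it below -/
import Mathlib

section
/- For every n ≥ 1, the map sending a permutation σ ∈ S_n to the ordered partition ←σ_1|⋯|←σ_p of {1,…,n} whose blocks are (the underlying sets of) the maximal strictly decreasing consecutive subwords of the word σ(1)σ(2)⋯σ(n), listed in order of occurrence, is a bijection from S_n onto the set of step increasing ordered partitions of {1,…,n}; likewise, the map sending σ to the ordered partition →σ_q|⋯|→σ_1 whose blocks are the maximal strictly increasing consecutive subwords of σ(1)⋯σ(n), listed in order of occurrence, is a bijection from S_n onto the set of step decreasing ordered partitions of {1,…,n}. -/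
open scoped Classical

namespace SU

/-- min of a finset of naturals (0 for the empty set). -/
def fmin (s : Finset ℕ) : ℕ := s.min.untopD 0
/-- max of a finset of naturals (0 for the empty set). -/
def fmax (s : Finset ℕ) : ℕ := s.max.unbotD 0

/-- `L` is an ordered partition of the finite set `S`. -/
def IsOrderedPartition (S : Finset ℕ) (L : List (Finset ℕ)) : Prop :=
  (∀ B ∈ L, B ≠ ∅) ∧ List.Pairwise Disjoint L ∧ L.foldr (· ∪ ·) ∅ = S

def StepIncreasing (L : List (Finset ℕ)) : Prop :=
  ∀ j, j + 1 < L.length → fmin (L.getD j ∅) < fmax (L.getD (j+1) ∅)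

def StepDecreasing (L : List (Finset ℕ)) : Prop :=
  ∀ j, j + 1 < L.length → fmin (L.getD (j+1) ∅) < fmax (L.getD j ∅)

/-- maximal strictly decreasing consecutive subwords, in order of occurrence. -/
def decRuns : List ℕ → List (List ℕ)
  | [] => []
  | a :: l =>
    match decRuns l with
    | [] => [[a]]
    | r :: rs => if r.headD 0 < a then (a :: r) :: rs else [a] :: r :: rs

/-- maximal strictly increasing consecutive subwords, in order of occurrence. -/
def incRuns : List ℕ → List (List ℕ)
  | [] => []
  | a :: l =>
    match incRuns l with
    | [] => [[a]]
    | r :: rs => if a < r.headD 0 then (a :: r) :: rs else [a] :: r :: rs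

/-- The word `σ(1) σ(2) ⋯ σ(n)` of a permutation, with values in `{1,…,n}`. -/
def permWord (n : ℕ) (σ : Equiv.Perm (Fin n)) : List ℕ :=
  List.ofFn (fun k => ((σ k : ℕ) + 1))

def decBlocks (w : List ℕ) : List (Finset ℕ) := (decRuns w).map List.toFinset
def incBlocks (w : List ℕ) : List (Finset ℕ) := (incRuns w).map List.toFinset

end SU


open scoped Classical

namespace SU

def inversions (w : List ℕ) : ℕ :=
  ((Finset.range w.length ×ˢ Finset.range w.length).filter
    (fun ab => ab.1 < ab.2 ∧ w.getD ab.2 0 < w.getD ab.1 0)).card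

/-- Sign of the permutation taking the increasing word to the concatenation of the
blocks of `L`, each listed in increasing order. -/
def psgn (L : List (Finset ℕ)) : ℤ :=
  (-1) ^ inversions ((L.map (fun s => s.sort (· ≤ ·))).flatten)

def shuffSgn (M N : Finset ℕ) : ℤ := psgn [M, N]

/-- degree of an ordered partition: `Σ (#block − 1)`. -/
def degp (L : List (Finset ℕ)) : ℕ := (L.map (fun s => s.card - 1)).sum

def eps1 (L : List (Finset ℕ)) : ℕ :=
  ∑ k ∈ Finset.range L.length, (L.length - 1 - k) * (L.getD k ∅).card

def sgn1 (L : List (Finset ℕ)) : ℤ := (-1) ^ eps1 L * psgn L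
def sgn2 (L : List (Finset ℕ)) : ℤ :=
  (-1) ^ (eps1 L + Nat.choose (L.length - 1) 2) * psgn L
def rsgn (L : List (Finset ℕ)) : ℤ :=
  (-1) ^ (∑ k ∈ Finset.range L.length, (L.getD k ∅).card * ((L.getD k ∅).card - 1) / 2)

/-- Entry of a matrix, with `0` outside the index range; `i` counts rows from the top,
`j` counts columns from the left, both 0-based. -/
def entry {q p : ℕ} (M : Matrix (Fin q) (Fin p) ℕ) (i j : ℕ) : ℕ :=
  if h : i < q ∧ j < p then M ⟨i, h.1⟩ ⟨j, h.2⟩ else 0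

def colBlock {q p : ℕ} (M : Matrix (Fin q) (Fin p) ℕ) (j : ℕ) : Finset ℕ :=
  ((Finset.range q).image (fun i => entry M i j)).erase 0

def rowBlock {q p : ℕ} (M : Matrix (Fin q) (Fin p) ℕ) (i : ℕ) : Finset ℕ :=
  ((Finset.range p).image (fun j => entry M i j)).erase 0

/-- column face `c(O) = U_1|⋯|U_p`. -/
def colFace {q p : ℕ} (M : Matrix (Fin q) (Fin p) ℕ) : List (Finset ℕ) :=
  (List.range p).map (colBlock M)

/-- row face `r(O) = V_q|⋯|V_1` (rows listed from bottom to top). -/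
def rowFace {q p : ℕ} (M : Matrix (Fin q) (Fin p) ℕ) : List (Finset ℕ) :=
  ((List.range q).map (rowBlock M)).reverse

/-- set of nonzero entries of a matrix. -/
def entrySet {q p : ℕ} (M : Matrix (Fin q) (Fin p) ℕ) : Finset ℕ :=
  (((Finset.range q) ×ˢ (Finset.range p)).image (fun ij => entry M ij.1 ij.2)).erase 0

def IsOrderedMatrix {q p : ℕ} (M : Matrix (Fin q) (Fin p) ℕ) : Prop :=
  0 < q ∧ 0 < p ∧
  entrySet M = Finset.Icc 1 (p + q - 1) ∧
  (∀ i < q, ∃ j < p, entry M i j ≠ 0) ∧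
  (∀ j < p, ∃ i < q, entry M i j ≠ 0) ∧
  (∀ i₁ j₁ i₂ j₂, entry M i₁ j₁ ≠ 0 → entry M i₂ j₂ ≠ 0 →
      entry M i₁ j₁ = entry M i₂ j₂ → i₁ = i₂ ∧ j₁ = j₂) ∧
  (∀ i j₁ j₂, j₁ < j₂ → entry M i j₁ ≠ 0 → entry M i j₂ ≠ 0 → entry M i j₁ < entry M i j₂) ∧
  (∀ j i₁ i₂, i₁ < i₂ → entry M i₁ j ≠ 0 → entry M i₂ j ≠ 0 → entry M i₁ j < entry M i₂ j)

def IsStepMatrix {q p : ℕ} (M : Matrix (Fin q) (Fin p) ℕ) : Prop :=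
  IsOrderedMatrix M ∧
  (∀ i j₁ j₂ j₃, j₁ ≤ j₂ → j₂ ≤ j₃ → entry M i j₁ ≠ 0 → entry M i j₃ ≠ 0 → entry M i j₂ ≠ 0) ∧
  (∀ j i₁ i₂ i₃, i₁ ≤ i₂ → i₂ ≤ i₃ → entry M i₁ j ≠ 0 → entry M i₃ j ≠ 0 → entry M i₂ j ≠ 0) ∧
  (∃! i, entry M i i ≠ 0) ∧
  (∀ i₁ i₂, entry M (i₁+1) i₁ ≠ 0 → entry M (i₂+1) i₂ ≠ 0 → i₁ = i₂) ∧
  (∀ i₁ i₂, entry M i₁ (i₁+1) ≠ 0 → entry M i₂ (i₂+1) ≠ 0 → i₁ = i₂)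

def DCond {q p : ℕ} (M : Matrix (Fin q) (Fin p) ℕ) (i j : ℕ) : Prop :=
  i + 1 < q ∧ j < p ∧ entry M (i+1) j = 0 ∧ entry M i j ≠ 0 ∧
  (∃ k < p, k ≠ j ∧ entry M i k ≠ 0) ∧
  (∀ ℓ < j, entry M (i+1) ℓ < entry M i j) ∧
  (∀ ℓ, j < ℓ → ℓ < p → entry M (i+1) ℓ ≠ 0 → entry M i j < entry M (i+1) ℓ)

/-- the down-shift operator `D_{i,j}` (0-based indices). -/
noncomputable def Dop {q p : ℕ} (M : Matrix (Fin q) (Fin p) ℕ) (i j : ℕ) :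
    Matrix (Fin q) (Fin p) ℕ :=
  if DCond M i j then
    Matrix.of fun a b =>
      if (a : ℕ) = i ∧ (b : ℕ) = j then 0
      else if (a : ℕ) = i + 1 ∧ (b : ℕ) = j then entry M i j
      else M a b
  else M

def RCond {q p : ℕ} (M : Matrix (Fin q) (Fin p) ℕ) (i j : ℕ) : Prop :=
  j + 1 < p ∧ i < q ∧ entry M i (j+1) = 0 ∧ entry M i j ≠ 0 ∧
  (∃ k < q, k ≠ i ∧ entry M k j ≠ 0) ∧
  (∀ ℓ < i, entry M ℓ (j+1) < entry M i j) ∧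
  (∀ ℓ, i < ℓ → ℓ < q → entry M ℓ (j+1) ≠ 0 → entry M i j < entry M ℓ (j+1))

/-- the right-shift operator `R_{i,j}` (0-based indices). -/
noncomputable def Rop {q p : ℕ} (M : Matrix (Fin q) (Fin p) ℕ) (i j : ℕ) :
    Matrix (Fin q) (Fin p) ℕ :=
  if RCond M i j then
    Matrix.of fun a b =>
      if (a : ℕ) = i ∧ (b : ℕ) = j then 0
      else if (a : ℕ) = i ∧ (b : ℕ) = j + 1 then entry M i j
      else M a b
  else M

inductive Shift
  | D (i j : ℕ)
  | R (i j : ℕ)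

noncomputable def applyShift {q p : ℕ} (g : Shift) (M : Matrix (Fin q) (Fin p) ℕ) :
    Matrix (Fin q) (Fin p) ℕ :=
  match g with
  | .D i j => Dop M i j
  | .R i j => Rop M i j

/-- `F` is obtained from `E` by a sequence of shift operators in which the down-shifts
occur with nondecreasing row indices and the right-shifts with nondecreasing column
indices (the list records the operators in order of application). -/
def DerivedFrom {q p : ℕ} (E F : Matrix (Fin q) (Fin p) ℕ) : Prop :=
  ∃ L : List Shift,
    (∀ i₁ j₁ i₂ j₂, List.Sublist [Shift.D i₁ j₁, Shift.D i₂ j₂] L → i₁ ≤ i₂) ∧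
    (∀ i₁ j₁ i₂ j₂, List.Sublist [Shift.R i₁ j₁, Shift.R i₂ j₂] L → j₁ ≤ j₂) ∧
    F = L.foldl (fun M g => applyShift g M) E

def IsConfigMatrix {q p : ℕ} (F : Matrix (Fin q) (Fin p) ℕ) : Prop :=
  IsOrderedMatrix F ∧ ∃ E, IsStepMatrix E ∧ DerivedFrom E F

/-- configuration sign of `F` derived from the step matrix `E`. -/
def csgnFrom {q p : ℕ} (E F : Matrix (Fin q) (Fin p) ℕ) : ℤ :=
  (-1) ^ Nat.choose q 2 * rsgn (colFace E) * sgn1 (rowFace F) * sgn2 (colFace E) *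
    sgn2 (colFace F)

noncomputable def csgn {q p : ℕ} (F : Matrix (Fin q) (Fin p) ℕ) : ℤ :=
  if h : ∃ E, IsStepMatrix E ∧ DerivedFrom E F then csgnFrom h.choose F else 1

end SU
section CoreC
open scoped Classical

namespace SU

/-- the row (0-based) of column `j` containing the value `v`. -/
noncomputable def rowOf {q p : ℕ} (M : Matrix (Fin q) (Fin p) ℕ) (j v : ℕ) : ℕ :=
  if h : ∃ i, i < q ∧ entry M i j = v then h.choose else q

/-- the column (0-based) of row `i` containing the value `v`. -/
noncomputable def colOf {q p : ℕ} (M : Matrix (Fin q) (Fin p) ℕ) (i v : ℕ) : ℕ :=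
  if h : ∃ j, j < p ∧ entry M i j = v then h.choose else p

/-- `R_{M_j}`: right-shifts moving each entry of `S` from column `j` to column `j+1`
(0-based), applied in increasing order of the entries. -/
noncomputable def applyRset {q p : ℕ} (M : Matrix (Fin q) (Fin p) ℕ) (j : ℕ) (S : Finset ℕ) :
    Matrix (Fin q) (Fin p) ℕ :=
  (S.sort (· ≤ ·)).foldl (fun acc v => Rop acc (rowOf acc j v) j) M

/-- `D_{N_i}`: down-shifts moving each entry of `S` from row `i` to row `i+1`
(0-based), applied in increasing order of the entries. -/
noncomputable def applyDset {q p : ℕ} (M : Matrix (Fin q) (Fin p) ℕ) (i : ℕ) (S : Finset ℕ) :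
    Matrix (Fin q) (Fin p) ℕ :=
  (S.sort (· ≤ ·)).foldl (fun acc v => Dop acc i (colOf acc i v)) M

/-- `D_{N_{q−1}} ⋯ D_{N_1} R_{M_{p−1}} ⋯ R_{M_1} E`, where `Mf j` is the set `M_j`
(`1 ≤ j ≤ p−1`) and `Nf i` is the set `N_i` (`1 ≤ i ≤ q−1`). -/
noncomputable def structComposite {q p : ℕ} (E : Matrix (Fin q) (Fin p) ℕ)
    (Mf Nf : ℕ → Finset ℕ) : Matrix (Fin q) (Fin p) ℕ :=
  (List.range (q-1)).foldl (fun acc i => applyDset acc i (Nf (i+1)))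
    ((List.range (p-1)).foldl (fun acc j => applyRset acc j (Mf (j+1))) E)

variable (K : Type) [CommRing K]

/-- boundary of a basis element of `C_*(P)`. -/
noncomputable def bnd (u : List (Finset ℕ)) : (List (Finset ℕ)) →₀ K :=
  ∑ k ∈ Finset.range u.length,
    ∑ M ∈ (u.getD k ∅).powerset,
      if M ≠ ∅ ∧ M ≠ u.getD k ∅ then
        ((((-1 : ℤ) ^ (degp (u.take k) + M.card)) * shuffSgn M (u.getD k ∅ \ M) : ℤ) : K) •
          Finsupp.single (u.take k ++ M :: (u.getD k ∅ \ M) :: u.drop (k+1)) (1 : K)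
      else 0

/-- `Δ_P` on the top cell `{1,…,m}`: the sum of `csgn F · c(F) ⊗ r(F)` over all
configuration matrices `F` with nonzero entry set `{1,…,m}` (with `Δ_P({1}) = {1}⊗{1}`). -/
noncomputable def deltaTop (m : ℕ) : (List (Finset ℕ) × List (Finset ℕ)) →₀ K :=
  if m = 1 then Finsupp.single ([{1}], [{1}]) 1
  else
    ∑ qq ∈ Finset.Icc 1 m, ∑ pp ∈ Finset.Icc 1 m,
      ∑ G : Fin qq → Fin pp → Fin (m+1),
        if IsConfigMatrix (Matrix.of fun i j => ((G i j : ℕ))) ∧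
            entrySet (Matrix.of fun i j => ((G i j : ℕ))) = Finset.Icc 1 m then
          ((csgn (Matrix.of fun i j => ((G i j : ℕ))) : ℤ) : K) •
            Finsupp.single (colFace (Matrix.of fun i j => ((G i j : ℕ))),
                            rowFace (Matrix.of fun i j => ((G i j : ℕ)))) 1
        else 0

/-- relabel a subset of `{1,…,#U}` along the order isomorphism `{1,…,#U} ≅ U`. -/
def relabel (U : Finset ℕ) (s : Finset ℕ) : Finset ℕ :=
  s.image (fun i => (U.sort (· ≤ ·)).getD (i - 1) 0)

/-- `Δ_P` on a basis element, via the standard comultiplicative extension with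
Koszul signs. -/
noncomputable def deltaFun : List (Finset ℕ) → ((List (Finset ℕ) × List (Finset ℕ)) →₀ K)
  | [] => Finsupp.single ([], []) 1
  | U :: L =>
      (deltaTop K U.card).sum fun ab c₁ =>
        (deltaFun L).sum fun ab' c₂ =>
          (c₁ * c₂ * (((-1 : ℤ) ^ (degp ab.2 * degp ab'.1) : ℤ) : K)) •
            Finsupp.single (ab.1.map (relabel U) ++ ab'.1, ab.2.map (relabel U) ++ ab'.2) 1

/-- linear extension of `Δ_P`. -/
noncomputable def deltaChain (f : (List (Finset ℕ)) →₀ K) :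
    (List (Finset ℕ) × List (Finset ℕ)) →₀ K :=
  f.sum fun u c => c • deltaFun K u

/-- `∂⊗1 + 1⊗∂` on the (concrete model of the) tensor square. -/
noncomputable def bndTensor (t : (List (Finset ℕ) × List (Finset ℕ)) →₀ K) :
    (List (Finset ℕ) × List (Finset ℕ)) →₀ K :=
  t.sum fun ab c =>
    c • ((bnd K ab.1).sum (fun a' c' => c' • Finsupp.single (a', ab.2) (1 : K)) +
         (((-1 : ℤ) ^ degp ab.1 : ℤ) : K) •
           (bnd K ab.2).sum (fun b' c' => c' • Finsupp.single (ab.1, b') (1 : K)))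

end SU
end CoreC
namespace SU

/-- maximal runs for a general relation. -/
noncomputable def gRuns (R : ℕ → ℕ → Prop) : List ℕ → List (List ℕ)
  | [] => []
  | a :: l =>
    match gRuns R l with
    | [] => [[a]]
    | r :: rs => if R a (r.headD 0) then (a :: r) :: rs else [a] :: r :: rs

theorem decRuns_eq (w : List ℕ) : decRuns w = gRuns (fun a b => b < a) w := by
  induction w with
  | nil => rfl
  | cons a l ih =>
    simp only [decRuns, gRuns, ih]
    split
    · rfl
    · split_ifs <;> rfl

theorem incRuns_eq (w : List ℕ) : incRuns w = gRuns (fun a b => a < b) w := by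
  induction w with
  | nil => rfl
  | cons a l ih =>
    simp only [incRuns, gRuns, ih]
    split
    · rfl
    · split_ifs <;> rfl

def Good (R : ℕ → ℕ → Prop) (rs : List (List ℕ)) : Prop :=
  (∀ r ∈ rs, r ≠ []) ∧ (∀ r ∈ rs, r.IsChain R) ∧
    rs.IsChain (fun r s => ¬ R (r.getLastD 0) (s.headD 0))

theorem gRuns_flatten (R : ℕ → ℕ → Prop) (w : List ℕ) : (gRuns R w).flatten = w := by
  induction w with
  | nil => rfl
  | cons a l ih =>
    simp only [gRuns]
    split
    · rename_i h; rw [h] at ih; simp at ih; simp [← ih]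
    · rename_i r rs h
      rw [h] at ih
      split_ifs <;> simp_all

theorem gRuns_good (R : ℕ → ℕ → Prop) (w : List ℕ) : Good R (gRuns R w) := by
  induction w with
  | nil => simp [gRuns, Good]
  | cons a l ih =>
    simp only [gRuns]
    split
    · simp [Good]
    · rename_i r rs h
      rw [h] at ih
      obtain ⟨h1, h2, h3⟩ := ih
      cases r with
      | nil => simp at h1
      | cons b r =>
        split_ifs with hR
        · refine ⟨?_, ?_, ?_⟩
          · simp_all
          · simp_all
          · cases rs <;> simp_all
        · refine ⟨?_, ?_, ?_⟩
          · simp_all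
          · simp_all
          · simp_all

theorem gRuns_of_good (R : ℕ → ℕ → Prop) (rs : List (List ℕ)) (h : Good R rs) :
    gRuns R rs.flatten = rs := by
  induction rs with
  | nil => rfl
  | cons r rs ih =>
    have h' : Good R rs := by
      obtain ⟨h1, h2, h3⟩ := h
      exact ⟨fun x hx => h1 x (by simp [hx]), fun x hx => h2 x (by simp [hx]), h3.tail⟩
    have ih := ih h'
    clear h'
    obtain ⟨h1, h2, h3⟩ := h
    have hr : r ≠ [] := h1 r (by simp)
    have hc : r.IsChain R := h2 r (by simp)
    have hl : ∀ s ∈ rs.head?, ¬ R (r.getLastD 0) (s.headD 0) := by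
      intro s hs
      cases rs with
      | nil => simp at hs
      | cons t ts => simp at hs; subst hs; simpa using (List.isChain_cons_cons.1 h3).1
    clear h1 h2 h3
    induction r with
    | nil => exact absurd rfl hr
    | cons a r ihr =>
      cases r with
      | nil =>
        simp only [List.flatten_cons, List.cons_append, List.nil_append, gRuns, ih]
        cases rs with
        | nil => rfl
        | cons s ss =>
          have := hl s (by simp)
          simp only [List.getLastD_cons, List.getLastD_nil] at this
          exact if_neg this
      | cons b r =>
        have h4 := ihr (by simp) (List.isChain_cons_cons.1 hc).2 (by simpa using hl)
        have h5 := (List.isChain_cons_cons.1 hc).1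
        simp only [List.flatten_cons, List.cons_append] at h4 ⊢
        rw [gRuns, h4]
        simp [h5]

theorem mem_foldr_union (L : List (Finset ℕ)) (x : ℕ) :
    x ∈ L.foldr (· ∪ ·) ∅ ↔ ∃ B ∈ L, x ∈ B := by
  induction L with
  | nil => simp
  | cons a l ih => simp [ih]

theorem permWord_inj (n : ℕ) (σ τ : Equiv.Perm (Fin n)) (h : permWord n σ = permWord n τ) :
    σ = τ := by
  have := List.ofFn_injective h
  ext k
  have := congrFun this k
  simpa using this

theorem permWord_nodup (n : ℕ) (σ : Equiv.Perm (Fin n)) : (permWord n σ).Nodup := by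
  rw [permWord, List.nodup_ofFn]
  intro a b h
  exact σ.injective (Fin.ext (by simpa using h))

theorem mem_permWord (n : ℕ) (σ : Equiv.Perm (Fin n)) (x : ℕ) :
    x ∈ permWord n σ ↔ x ∈ Finset.Icc 1 n := by
  simp only [permWord, List.mem_ofFn, Finset.mem_Icc]
  constructor
  · rintro ⟨k, rfl⟩
    have := (σ k).2
    omega
  · rintro ⟨h1, h2⟩
    refine ⟨σ.symm ⟨x - 1, by omega⟩, ?_⟩
    simp; omega

theorem exists_permWord (n : ℕ) (w : List ℕ) (hw : w.Nodup)
    (hm : ∀ x, x ∈ w ↔ x ∈ Finset.Icc 1 n) : ∃ σ, permWord n σ = w := by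
  have hlen : w.length = n := by
    have : w.toFinset = Finset.Icc 1 n := by ext x; simp [hm]
    have h2 := congrArg Finset.card this
    rw [List.toFinset_card_of_nodup hw] at h2
    simpa using h2
  have hb : ∀ k : Fin n, 1 ≤ w[(k : ℕ)] ∧ w[(k : ℕ)] ≤ n := by
    intro k
    have := (hm w[(k : ℕ)]).1 (List.getElem_mem _)
    simpa using this
  let f : Fin n → Fin n := fun k => ⟨w[(k : ℕ)] - 1, by have := hb k; omega⟩
  have hf : Function.Injective f := by
    intro a b h
    have h1 := congrArg Fin.val h
    simp only [f] at h1
    have ha := hb a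
    have hb' := hb b
    have h2 : w[(a : ℕ)] = w[(b : ℕ)] := by omega
    exact Fin.ext ((hw.getElem_inj_iff).1 h2)
  refine ⟨Equiv.ofBijective f (Finite.injective_iff_bijective.1 hf), ?_⟩
  apply List.ext_getElem
  · simp [permWord, hlen]
  · intro i h1 h2
    have := hb ⟨i, by omega⟩
    simp [permWord, f]
    simp at this
    omega

theorem main (R : ℕ → ℕ → Prop) (htrans : ∀ a b c, R a b → R b c → R a c)
    (hirr : ∀ a, ¬ R a a) (htri : ∀ a b, a ≠ b → ¬ R a b → R b a)
    (fl fh : Finset ℕ → ℕ)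
    (hfl : ∀ l : List ℕ, l ≠ [] → l.Pairwise R → fl l.toFinset = l.getLastD 0)
    (hfh : ∀ l : List ℕ, l ≠ [] → l.Pairwise R → fh l.toFinset = l.headD 0)
    (hex : ∀ s : Finset ℕ, ∃ l : List ℕ, l.Pairwise R ∧ l.toFinset = s) (n : ℕ) :
    Set.BijOn (fun σ : Equiv.Perm (Fin n) => (gRuns R (permWord n σ)).map List.toFinset) Set.univ
      {L : List (Finset ℕ) | IsOrderedPartition (Finset.Icc 1 n) L ∧
        L.IsChain (fun A B => R (fh B) (fl A))} := by
  haveI : IsTrans ℕ R := ⟨htrans⟩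
  have hnd : ∀ l : List ℕ, l.Pairwise R → l.Nodup := fun l hl =>
    hl.imp (fun {a b} h e => by subst e; exact hirr _ h)
  have huniq : ∀ l m : List ℕ, l.Pairwise R → m.Pairwise R → l.toFinset = m.toFinset → l = m := by
    intro l m hl hm he
    have hp := List.perm_of_nodup_nodup_toFinset_eq (hnd l hl) (hnd m hm) he
    exact hp.eq_of_pairwise (fun a b _ _ h1 h2 => absurd (htrans _ _ _ h1 h2) (hirr a)) hl hm
  refine ⟨?_, ?_, ?_⟩
  · intro σ _
    have hw := permWord_nodup n σ
    have hm := mem_permWord n σ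
    obtain ⟨h1, h2, h3⟩ := gRuns_good R (permWord n σ)
    have hf := gRuns_flatten R (permWord n σ)
    simp only [Set.mem_setOf_eq]
    rw [← hf] at hw hm
    generalize gRuns R (permWord n σ) = rs at *
    rw [List.nodup_flatten] at hw
    refine ⟨⟨?_, ?_, ?_⟩, ?_⟩
    · intro B hB
      obtain ⟨r, hr, rfl⟩ := List.mem_map.1 hB
      simpa using h1 r hr
    · rw [List.pairwise_map]
      exact hw.2.imp (fun {a b} h => by rwa [List.disjoint_toFinset_iff_disjoint])
    · ext x
      rw [mem_foldr_union, ← hm]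
      simp
    · rw [List.isChain_map]
      have h4 := hw.2.isChain
      rw [List.isChain_iff_getElem] at h3 h4 ⊢
      intro i hi
      have a1 : rs[i] ∈ rs := List.getElem_mem _
      have a2 : rs[i+1] ∈ rs := List.getElem_mem _
      rw [hfl _ (h1 _ a1) (h2 _ a1).pairwise, hfh _ (h1 _ a2) (h2 _ a2).pairwise]
      refine htri _ _ ?_ (h3 i hi)
      have h5 := h4 i hi
      have n1 := h1 _ a1
      have n2 := h1 _ a2
      generalize rs[i] = r at *
      generalize rs[i+1] = s at *
      intro he
      apply h5 (a := r.getLastD 0)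
      · rw [List.getLastD_eq_getLast?, List.getLast?_eq_some_getLast n1]
        exact List.getLast_mem n1
      · rw [he]
        cases s with
        | nil => exact absurd rfl n2
        | cons b s => simp
  · intro σ _ τ _ h
    apply permWord_inj
    simp only at h
    rw [← gRuns_flatten R (permWord n σ), ← gRuns_flatten R (permWord n τ)]
    obtain ⟨-, h2, -⟩ := gRuns_good R (permWord n σ)
    obtain ⟨-, g2, -⟩ := gRuns_good R (permWord n τ)
    generalize gRuns R (permWord n σ) = rs at *
    generalize gRuns R (permWord n τ) = ss at *
    congr 1
    have hl : rs.length = ss.length := by simpa using congrArg List.length h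
    apply List.ext_getElem hl
    intro i hi hi'
    apply huniq _ _ (h2 _ (List.getElem_mem _)).pairwise (g2 _ (List.getElem_mem _)).pairwise
    have := List.getElem_of_eq h (i := i) (by simpa using hi)
    simpa using this
  · rintro L ⟨⟨h1, h2, h3⟩, h4⟩
    choose f hf1 hf2 using hex
    have hLmap : (L.map f).map List.toFinset = L := by
      rw [List.map_map]
      conv_rhs => rw [← List.map_id L]
      apply List.map_congr_left
      intro a _
      simp [hf2]
    have hne : ∀ B ∈ L, f B ≠ [] := by
      intro B hB he
      apply h1 B hB
      rw [← hf2 B, he]; rfl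
    have hgood : Good R (L.map f) := by
      refine ⟨?_, ?_, ?_⟩
      · simpa using hne
      · intro r hr
        obtain ⟨B, _, rfl⟩ := List.mem_map.1 hr
        exact (hf1 B).isChain
      · rw [List.isChain_map]
        rw [List.isChain_iff_getElem] at h4 ⊢
        intro i hi
        have a1 : L[i] ∈ L := List.getElem_mem _
        have a2 : L[i+1] ∈ L := List.getElem_mem _
        rw [← hfl _ (hne _ a1) (hf1 _), ← hfh _ (hne _ a2) (hf1 _), hf2, hf2]
        intro hc
        exact hirr _ (htrans _ _ _ hc (h4 i hi))
    have hmem : ∀ x B, x ∈ f B ↔ x ∈ B := by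
      intro x B
      conv_rhs => rw [← hf2 B]
      simp
    obtain ⟨σ, hσ⟩ := exists_permWord n (L.map f).flatten (by
      rw [List.nodup_flatten, List.pairwise_map]
      refine ⟨?_, ?_⟩
      · intro r hr
        obtain ⟨B, _, rfl⟩ := List.mem_map.1 hr
        exact hnd _ (hf1 B)
      · exact h2.imp (fun {a b} h => by
          rw [← List.disjoint_toFinset_iff_disjoint, hf2, hf2]; exact h)) (by
      intro x
      rw [← h3, mem_foldr_union]
      simp [hmem])
    refine ⟨σ, trivial, ?_⟩
    simp only
    rw [hσ, gRuns_of_good R _ hgood, hLmap]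

theorem fmin_eq (s : Finset ℕ) (a : ℕ) (ha : a ∈ s) (h : ∀ b ∈ s, a ≤ b) : fmin s = a := by
  have : s.min = (a : WithTop ℕ) :=
    le_antisymm (Finset.min_le ha) (Finset.le_min fun b hb => WithTop.coe_le_coe.2 (h b hb))
  rw [fmin, this]; rfl

theorem fmax_eq (s : Finset ℕ) (a : ℕ) (ha : a ∈ s) (h : ∀ b ∈ s, b ≤ a) : fmax s = a := by
  have : s.max = (a : WithBot ℕ) :=
    le_antisymm (Finset.max_le fun b hb => WithBot.coe_le_coe.2 (h b hb)) (Finset.le_max ha)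
  rw [fmax, this]; rfl

theorem headD_spec (R : ℕ → ℕ → Prop) (l : List ℕ) (hl : l ≠ []) (hp : l.Pairwise R) :
    l.headD 0 ∈ l ∧ ∀ b ∈ l, l.headD 0 = b ∨ R (l.headD 0) b := by
  cases l with
  | nil => exact absurd rfl hl
  | cons a l =>
    rw [List.pairwise_cons] at hp
    refine ⟨by simp, ?_⟩
    intro b hb
    rcases List.mem_cons.1 hb with rfl | hb
    · simp
    · right; exact hp.1 b hb

theorem getLastD_spec (R : ℕ → ℕ → Prop) (l : List ℕ) (hl : l ≠ []) (hp : l.Pairwise R) :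
    l.getLastD 0 ∈ l ∧ ∀ b ∈ l, l.getLastD 0 = b ∨ R b (l.getLastD 0) := by
  have h := headD_spec (fun a b => R b a) l.reverse (by simpa using hl)
    (List.pairwise_reverse.2 hp)
  have e : l.reverse.headD 0 = l.getLastD 0 := by
    rw [List.headD_eq_head?_getD, List.head?_reverse, List.getLastD_eq_getLast?]
  rw [e] at h
  simpa using h

theorem stepInc_iff (L : List (Finset ℕ)) :
    StepIncreasing L ↔ L.IsChain (fun A B => fmin A < fmax B) := by
  rw [List.isChain_iff_getElem, StepIncreasing]
  refine forall_congr' fun j => forall_congr' fun h => ?_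
  rw [List.getD_eq_getElem _ _ h, List.getD_eq_getElem _ _ (by omega)]

theorem stepDec_iff (L : List (Finset ℕ)) :
    StepDecreasing L ↔ L.IsChain (fun A B => fmin B < fmax A) := by
  rw [List.isChain_iff_getElem, StepDecreasing]
  refine forall_congr' fun j => forall_congr' fun h => ?_
  rw [List.getD_eq_getElem _ _ h, List.getD_eq_getElem _ _ (by omega)]


/-- For `n ≥ 1`, `σ ↦ ←σ₁|⋯|←σ_p` (underlying sets of the maximal
strictly decreasing consecutive subwords, in order of occurrence) is a bijection from
`S_n` onto the step increasing ordered partitions of `{1,…,n}`, and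
`σ ↦ →σ_q|⋯|→σ₁` (maximal strictly increasing consecutive subwords, in order of
occurrence) is a bijection from `S_n` onto the step decreasing ordered partitions. -/
theorem statement0 (n : ℕ) (hn : 1 ≤ n) :
    Set.BijOn (fun σ : Equiv.Perm (Fin n) => decBlocks (permWord n σ)) Set.univ
      {L : List (Finset ℕ) | IsOrderedPartition (Finset.Icc 1 n) L ∧ StepIncreasing L} ∧
    Set.BijOn (fun σ : Equiv.Perm (Fin n) => incBlocks (permWord n σ)) Set.univ
      {L : List (Finset ℕ) | IsOrderedPartition (Finset.Icc 1 n) L ∧ StepDecreasing L} := by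
  have hsort : ∀ s : Finset ℕ, (s.sort (· ≤ ·)).Pairwise (fun a b => a < b) := fun s =>
    (Finset.sortedLT_sort s).pairwise
  constructor
  · have := main (fun a b => b < a) (fun a b c h1 h2 => by omega) (fun a => by omega)
      (fun a b h1 h2 => by omega) fmin fmax
      (fun l hl hp => by
        obtain ⟨h1, h2⟩ := getLastD_spec _ l hl hp
        refine fmin_eq _ _ (by simpa using h1) (fun b hb => ?_)
        have := h2 b (by simpa using hb)
        omega)
      (fun l hl hp => by
        obtain ⟨h1, h2⟩ := headD_spec _ l hl hp
        refine fmax_eq _ _ (by simpa using h1) (fun b hb => ?_)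
        have := h2 b (by simpa using hb)
        omega)
      (fun s => ⟨(s.sort (· ≤ ·)).reverse, List.pairwise_reverse.2 (hsort s), by simp⟩) n
    simpa only [decBlocks, decRuns_eq, stepInc_iff] using this
  · have := main (fun a b => a < b) (fun a b c h1 h2 => by omega) (fun a => by omega)
      (fun a b h1 h2 => by omega) fmax fmin
      (fun l hl hp => by
        obtain ⟨h1, h2⟩ := getLastD_spec _ l hl hp
        refine fmax_eq _ _ (by simpa using h1) (fun b hb => ?_)
        have := h2 b (by simpa using hb)
        omega)
      (fun l hl hp => by
        obtain ⟨h1, h2⟩ := headD_spec _ l hl hp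
        refine fmin_eq _ _ (by simpa using h1) (fun b hb => ?_)
        have := h2 b (by simpa using hb)
        omega)
      (fun s => ⟨s.sort (· ≤ ·), hsort s, by simp⟩) n
    simpa only [incBlocks, incRuns_eq, stepDec_iff] using this

end SU
end

section
/- Let O be an ordered matrix and let (i,j) be a position such that both operators in the composition D_{i,j+1}∘R_{i,j} act nontrivially (R_{i,j} changes O and D_{i,j+1} changes R_{i,j}O) and both operators in the composition R_{i+1,j}∘D_{i,j} act nontrivially. Then D_{i,j+1}R_{i,j}O = R_{i+1,j}D_{i,j}O. -/
open scoped Classical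

open scoped Classical

namespace SU

/-- If both operators in `D_{i,j+1} ∘ R_{i,j}` act nontrivially and
both operators in `R_{i+1,j} ∘ D_{i,j}` act nontrivially on an ordered matrix `O`,
then `D_{i,j+1} R_{i,j} O = R_{i+1,j} D_{i,j} O`. -/
theorem statement3 {q p : ℕ} (O : Matrix (Fin q) (Fin p) ℕ) (hO : IsOrderedMatrix O)
    (i j : ℕ)
    (h₁ : Rop O i j ≠ O) (h₂ : Dop (Rop O i j) i (j+1) ≠ Rop O i j)
    (h₃ : Dop O i j ≠ O) (h₄ : Rop (Dop O i j) (i+1) j ≠ Dop O i j) :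
    Dop (Rop O i j) i (j+1) = Rop (Dop O i j) (i+1) j := by
  have c1 : RCond O i j := by
    by_contra h; exact h₁ (by simp [Rop, h])
  have c3 : DCond O i j := by
    by_contra h; exact h₃ (by simp [Dop, h])
  have c2 : DCond (Rop O i j) i (j+1) := by
    by_contra h; exact h₂ (by rw [Dop, if_neg h])
  have c4 : RCond (Dop O i j) (i+1) j := by
    by_contra h; exact h₄ (by rw [Rop, if_neg h])
  obtain ⟨hj, hi, hz1, -⟩ := id c1
  obtain ⟨hi', hj', hz2, -⟩ := id c3
  have e1 : entry (Rop O i j) i (j+1) = entry O i j := by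
    rw [Rop, if_pos c1]; simp [entry, hi, hj]
  have e2 : entry (Dop O i j) (i+1) j = entry O i j := by
    rw [Dop, if_pos c3]; simp [entry, hi', hj']
  rw [show Dop (Rop O i j) i (j+1) = _ from if_pos c2,
    show Rop (Dop O i j) (i+1) j = _ from if_pos c4, e1, e2,
    show Rop O i j = _ from if_pos c1, show Dop O i j = _ from if_pos c3]
  ext a b
  have z1 : (a : ℕ) = i → (b : ℕ) = j + 1 → O a b = 0 := by
    rintro rfl hb
    simpa [entry, ← hb] using hz1
  have z2 : (a : ℕ) = i + 1 → (b : ℕ) = j → O a b = 0 := by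
    rintro ha rfl
    simpa [entry, ← ha] using hz2
  simp only [Matrix.of_apply]
  grind

end SU
end

section
/- Let F = (f_{i,j}) be a configuration matrix derived from a step matrix E, with column face c(F) = U_1|⋯|U_p and row face r(F) = V_q|⋯|V_1. (i) If the down-shift D_{i,j} acts nontrivially on F and F′ = D_{i,j}F = (f′_{i,j}) is also a configuration matrix derived from E, with row face r(F′) = V′_q|⋯|V′_1, then csgn(D_{i,j}F)·csgn(F) = −(−1)^e, where e = #{y ∈ V′_{i+1} : y > f′_{i+1,j}} + #{y ∈ V_i : y < f_{i,j}}. (ii) If the right-shift R_{i,j} acts nontrivially on F and F″ = R_{i,j}F = (f″_{i,j}) is also a configuration matrix derived from E, with column face c(F″) = U″_1|⋯|U″_p, then csgn(R_{i,j}F)·csgn(F) = −(−1)^{e′}, where e′ = #{y ∈ U_j : y > f_{i,j}} + #{y ∈ U″_{j+1} : y < f″_{i,j+1}}. -/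
open scoped Classical

open scoped Classical

namespace SU

/-- recursive form of the inversion count -/
def invR : List ℕ → ℕ
  | [] => 0
  | a :: l => l.countP (fun x => decide (x < a)) + invR l

lemma countP_eq_sum (a : ℕ) (l : List ℕ) :
    l.countP (fun x => decide (x < a)) =
      ∑ b ∈ Finset.range l.length, if l.getD b 0 < a then 1 else 0 := by
  induction l with
  | nil => simp
  | cons b l ih =>
    rw [List.length_cons, Finset.sum_range_succ', List.countP_cons, ih]
    simp

lemma inversions_eq_sum (w : List ℕ) : inversions w =
    ∑ a ∈ Finset.range w.length, ∑ b ∈ Finset.range w.length,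
      if a < b ∧ w.getD b 0 < w.getD a 0 then 1 else 0 := by
  unfold inversions
  rw [Finset.card_filter, Finset.sum_product]

lemma inversions_eq (w : List ℕ) : inversions w = invR w := by
  induction w with
  | nil => simp [inversions, invR]
  | cons a l ih =>
    rw [inversions_eq_sum] at ih ⊢
    rw [invR, ← ih, countP_eq_sum, List.length_cons, Finset.sum_range_succ', add_comm]
    congr 1
    · rw [Finset.sum_range_succ']
      simp
    · apply Finset.sum_congr rfl
      intro x _
      rw [Finset.sum_range_succ']
      simp

lemma invR_move (f : ℕ) (m t : List ℕ) (hf : f ∉ m) :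
    (invR (f :: (m ++ t)) + invR (m ++ f :: t)) % 2 = m.length % 2 := by
  induction m with
  | nil => simp; omega
  | cons b m ih =>
    simp only [List.mem_cons, not_or] at hf
    have := ih hf.2
    simp only [List.cons_append, invR, List.countP_cons, List.countP_append, List.length_cons,
      decide_eq_true_eq] at this ⊢
    have h := hf.1
    split_ifs <;> omega

lemma invR_prefix (s w w' : List ℕ) (h : w.Perm w') :
    (invR (s ++ w) + invR (s ++ w')) % 2 = (invR w + invR w') % 2 := by
  induction s with
  | nil => simp
  | cons a s ih =>
    simp only [List.cons_append, invR, List.countP_append, h.countP_eq]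
    omega

lemma sort_insert_split (f : ℕ) (X : Finset ℕ) (hf : f ∉ X) :
    (insert f X).sort (· ≤ ·) = (X.filter (· < f)).sort (· ≤ ·) ++
      f :: (X.filter (f < ·)).sort (· ≤ ·) := by
  symm
  apply List.Perm.eq_of_pairwise' (r := (· ≤ ·))
  · rw [List.pairwise_append, List.pairwise_cons]
    refine ⟨Finset.pairwise_sort _ _, ⟨?_, Finset.pairwise_sort _ _⟩, ?_⟩
    · intro a ha; simp at ha; exact ha.2.le
    · intro a ha b hb; simp at ha hb; omega
  · exact Finset.pairwise_sort _ _
  · rw [List.perm_ext_iff_of_nodup]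
    · intro a
      simp
      by_cases h : a = f
      · simp [h]
      · have : a < f ∨ f < a := by omega
        tauto
    · rw [List.nodup_append, List.nodup_cons]
      refine ⟨Finset.sort_nodup _ _, ⟨by simp, Finset.sort_nodup _ _⟩, ?_⟩
      intro a ha b hb; simp at ha hb; omega
    · exact Finset.sort_nodup _ _

lemma sort_split (f : ℕ) (X : Finset ℕ) (hf : f ∉ X) :
    X.sort (· ≤ ·) = (X.filter (· < f)).sort (· ≤ ·) ++
      (X.filter (f < ·)).sort (· ≤ ·) := by
  symm
  apply List.Perm.eq_of_pairwise' (r := (· ≤ ·))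
  · rw [List.pairwise_append]
    refine ⟨Finset.pairwise_sort _ _, Finset.pairwise_sort _ _, ?_⟩
    · intro a ha b hb; simp at ha hb; omega
  · exact Finset.pairwise_sort _ _
  · rw [List.perm_ext_iff_of_nodup]
    · intro a
      simp
      by_cases h : a = f
      · simp [h, hf]
      · have : a < f ∨ f < a := by omega
        tauto
    · rw [List.nodup_append]
      refine ⟨Finset.sort_nodup _ _, Finset.sort_nodup _ _, ?_⟩
      intro a ha b hb; simp at ha hb; omega
    · exact Finset.sort_nodup _ _

lemma neg_one_pow_mul_of_mod {a b c : ℕ} (h : (a + b) % 2 = c % 2) :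
    (-1 : ℤ) ^ a * (-1) ^ b = (-1) ^ c := by
  rw [← pow_add, neg_one_pow_eq_pow_mod_two, h, ← neg_one_pow_eq_pow_mod_two]

lemma psgn_move (A B : List (Finset ℕ)) (X Y : Finset ℕ) (f : ℕ) (hX : f ∉ X) (hY : f ∉ Y) :
    psgn (A ++ insert f X :: Y :: B) * psgn (A ++ X :: insert f Y :: B) =
      (-1) ^ ((X.filter (f < ·)).card + (Y.filter (· < f)).card) := by
  unfold psgn
  apply neg_one_pow_mul_of_mod
  rw [inversions_eq, inversions_eq]
  simp only [List.map_append, List.map_cons, List.flatten_append, List.flatten_cons]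
  rw [sort_insert_split f X hX, sort_insert_split f Y hY, sort_split f X hX, sort_split f Y hY]
  set a := (A.map (fun s => s.sort (· ≤ ·))).flatten
  set b := (B.map (fun s => s.sort (· ≤ ·))).flatten
  set x1 := (X.filter (· < f)).sort (· ≤ ·)
  set x2 := (X.filter (f < ·)).sort (· ≤ ·) with hx2
  set y1 := (Y.filter (· < f)).sort (· ≤ ·) with hy1
  set y2 := (Y.filter (f < ·)).sort (· ≤ ·)
  have e1 : a ++ (x1 ++ f :: x2 ++ (y1 ++ y2 ++ b)) =
      (a ++ x1) ++ f :: ((x2 ++ y1) ++ (y2 ++ b)) := by simp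
  have e2 : a ++ (x1 ++ x2 ++ (y1 ++ f :: y2 ++ b)) =
      (a ++ x1) ++ ((x2 ++ y1) ++ f :: (y2 ++ b)) := by simp
  rw [e1, e2, invR_prefix _ _ _ List.perm_middle.symm, invR_move]
  · simp [hx2, hy1]
  · simp [hx2, hy1]

lemma eps1_cons (a : Finset ℕ) (L : List (Finset ℕ)) :
    eps1 (a :: L) = L.length * a.card + eps1 L := by
  unfold eps1
  rw [List.length_cons, Finset.sum_range_succ', add_comm]
  congr 1
  apply Finset.sum_congr rfl
  intro k _
  simp only [List.getD_cons_succ]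
  congr 1
  omega

lemma eps1_move (A B : List (Finset ℕ)) (X Y : Finset ℕ) (f : ℕ) (hX : f ∉ X) (hY : f ∉ Y) :
    eps1 (A ++ insert f X :: Y :: B) = eps1 (A ++ X :: insert f Y :: B) + 1 := by
  induction A with
  | nil =>
    simp only [List.nil_append, eps1_cons, Finset.card_insert_of_notMem hX,
      Finset.card_insert_of_notMem hY, List.length_cons]
    ring
  | cons a A ih =>
    simp only [List.cons_append, eps1_cons, ih, List.length_append, List.length_cons]
    ring

lemma sgn1_move (A B : List (Finset ℕ)) (X Y : Finset ℕ) (f : ℕ) (hX : f ∉ X) (hY : f ∉ Y) :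
    sgn1 (A ++ insert f X :: Y :: B) * sgn1 (A ++ X :: insert f Y :: B) =
      -(-1) ^ ((X.filter (f < ·)).card + (Y.filter (· < f)).card) := by
  rw [← psgn_move A B X Y f hX hY]
  unfold sgn1
  rw [eps1_move A B X Y f hX hY, pow_succ]
  have h : ∀ n : ℕ, (-1 : ℤ) ^ n * (-1) ^ n = 1 := by intro n; rw [← mul_pow]; simp
  linear_combination (-psgn (A ++ insert f X :: Y :: B) * psgn (A ++ X :: insert f Y :: B)) *
    h (eps1 (A ++ X :: insert f Y :: B))

lemma sgn2_eq (L : List (Finset ℕ)) : sgn2 L = (-1) ^ Nat.choose (L.length - 1) 2 * sgn1 L := by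
  unfold sgn2 sgn1
  rw [pow_add]; ring

lemma neg_one_pow_mul_self' (n : ℕ) : (-1 : ℤ) ^ n * (-1) ^ n = 1 := by
  rw [← mul_pow]; simp

lemma sgn1_sq (L : List (Finset ℕ)) : sgn1 L * sgn1 L = 1 := by
  unfold sgn1 psgn
  rw [← pow_add, neg_one_pow_mul_self']

lemma sgn2_mul (L L' : List (Finset ℕ)) (h : L.length = L'.length) :
    sgn2 L * sgn2 L' = sgn1 L * sgn1 L' := by
  rw [sgn2_eq, sgn2_eq, h]
  linear_combination sgn1 L * sgn1 L' * neg_one_pow_mul_self' (Nat.choose (L'.length - 1) 2)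

lemma rsgn_sq (L : List (Finset ℕ)) : rsgn L * rsgn L = 1 := by
  unfold rsgn
  rw [neg_one_pow_mul_self']

lemma csgnFrom_mul {q p : ℕ} (E F G : Matrix (Fin q) (Fin p) ℕ) :
    csgnFrom E G * csgnFrom E F = (sgn1 (rowFace G) * sgn1 (rowFace F)) *
      (sgn1 (colFace G) * sgn1 (colFace F)) := by
  rw [← sgn2_mul (colFace G) (colFace F) (by simp [colFace])]
  unfold csgnFrom
  have h1 := neg_one_pow_mul_self' (Nat.choose q 2)
  have h2 := rsgn_sq (colFace E)
  have h3 : sgn2 (colFace E) * sgn2 (colFace E) = 1 := by rw [sgn2_mul _ _ rfl, sgn1_sq]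
  generalize (-1 : ℤ) ^ Nat.choose q 2 = a at *
  generalize rsgn (colFace E) = b at *
  generalize sgn2 (colFace E) = c at *
  calc _ = (a * a) * (b * b) * (c * c) * ((sgn1 (rowFace G) * sgn1 (rowFace F)) *
      (sgn2 (colFace G) * sgn2 (colFace F))) := by ring
    _ = _ := by rw [h1, h2, h3]; ring

lemma range_map_split (g : ℕ → Finset ℕ) (n j : ℕ) (h : j + 1 < n) :
    (List.range n).map g = (List.range j).map g ++ g j :: g (j+1) ::
      (List.range (n - (j+2))).map (fun k => g (j + 2 + k)) := by
  obtain ⟨m, rfl⟩ : ∃ m, n = j + 2 + m := ⟨n - (j+2), by omega⟩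
  rw [List.range_add, List.map_append, List.range_succ, List.range_succ]
  simp [Function.comp_def]

lemma move_col (g g' : ℕ → Finset ℕ) (n j f : ℕ) (h : j + 1 < n)
    (hne : ∀ k, k ≠ j → k ≠ j + 1 → g' k = g k)
    (hf : f ∉ g' j) (hf' : f ∉ g (j+1)) (h1 : g j = insert f (g' j))
    (h2 : g' (j+1) = insert f (g (j+1))) :
    sgn1 ((List.range n).map g') * sgn1 ((List.range n).map g) =
      -(-1) ^ (((g j).filter (f < ·)).card + ((g' (j+1)).filter (· < f)).card) := by
  rw [range_map_split g n j h, range_map_split g' n j h]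
  have e1 : (List.range j).map g' = (List.range j).map g := by
    apply List.map_congr_left
    intro k hk
    rw [List.mem_range] at hk
    exact hne k (by omega) (by omega)
  have e2 : (List.range (n - (j+2))).map (fun k => g' (j + 2 + k)) =
      (List.range (n - (j+2))).map (fun k => g (j + 2 + k)) := by
    apply List.map_congr_left
    intro k hk
    exact hne _ (by omega) (by omega)
  rw [e1, e2, h1, h2, mul_comm, sgn1_move _ _ _ _ _ hf hf', Finset.filter_insert,
    Finset.filter_insert]
  simp

lemma move_row (g g' : ℕ → Finset ℕ) (n j f : ℕ) (h : j + 1 < n)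
    (hne : ∀ k, k ≠ j → k ≠ j + 1 → g' k = g k)
    (hf : f ∉ g' j) (hf' : f ∉ g (j+1)) (h1 : g j = insert f (g' j))
    (h2 : g' (j+1) = insert f (g (j+1))) :
    sgn1 ((List.range n).map g').reverse * sgn1 ((List.range n).map g).reverse =
      -(-1) ^ (((g' (j+1)).filter (f < ·)).card + ((g j).filter (· < f)).card) := by
  rw [range_map_split g n j h, range_map_split g' n j h]
  have e1 : (List.range j).map g' = (List.range j).map g := by
    apply List.map_congr_left
    intro k hk
    rw [List.mem_range] at hk
    exact hne k (by omega) (by omega)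
  have e2 : (List.range (n - (j+2))).map (fun k => g' (j + 2 + k)) =
      (List.range (n - (j+2))).map (fun k => g (j + 2 + k)) := by
    apply List.map_congr_left
    intro k hk
    exact hne _ (by omega) (by omega)
  rw [e1, e2, h1, h2]
  simp only [List.reverse_append, List.reverse_cons, List.append_assoc, List.cons_append,
    List.nil_append]
  rw [sgn1_move _ _ _ _ _ hf' hf, Finset.filter_insert, Finset.filter_insert]
  simp

lemma entry_bound {q p : ℕ} {M : Matrix (Fin q) (Fin p) ℕ} {i j : ℕ} (h : entry M i j ≠ 0) :
    i < q ∧ j < p := by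
  unfold entry at h
  by_contra hc
  simp [hc] at h

lemma mem_rowBlock {q p : ℕ} (M : Matrix (Fin q) (Fin p) ℕ) (i v : ℕ) :
    v ∈ rowBlock M i ↔ v ≠ 0 ∧ ∃ j, entry M i j = v := by
  unfold rowBlock
  simp only [Finset.mem_erase, Finset.mem_image, Finset.mem_range]
  constructor
  · rintro ⟨h, j, _, hj⟩; exact ⟨h, j, hj⟩
  · rintro ⟨h, j, hj⟩; exact ⟨h, j, (entry_bound (hj ▸ h)).2, hj⟩

lemma mem_colBlock {q p : ℕ} (M : Matrix (Fin q) (Fin p) ℕ) (j v : ℕ) :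
    v ∈ colBlock M j ↔ v ≠ 0 ∧ ∃ i, entry M i j = v := by
  unfold colBlock
  simp only [Finset.mem_erase, Finset.mem_image, Finset.mem_range]
  constructor
  · rintro ⟨h, j, _, hj⟩; exact ⟨h, j, hj⟩
  · rintro ⟨h, j, hj⟩; exact ⟨h, j, (entry_bound (hj ▸ h)).1, hj⟩

lemma entry_Dop {q p : ℕ} (M : Matrix (Fin q) (Fin p) ℕ) (i j : ℕ) (h : DCond M i j) (a b : ℕ) :
    entry (Dop M i j) a b = if a = i ∧ b = j then 0 else
      if a = i + 1 ∧ b = j then entry M i j else entry M a b := by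
  obtain ⟨h1, h2, -⟩ := id h
  by_cases hab : a < q ∧ b < p
  · have : entry (Dop M i j) a b = Dop M i j ⟨a, hab.1⟩ ⟨b, hab.2⟩ := by simp [entry, hab]
    rw [this, Dop, if_pos h]
    have h' : entry M a b = M ⟨a, hab.1⟩ ⟨b, hab.2⟩ := by simp [entry, hab]
    rw [h']
    rfl
  · have e : ∀ N : Matrix (Fin q) (Fin p) ℕ, entry N a b = 0 := by
      intro N; unfold entry; rw [dif_neg hab]
    rw [e, e, if_neg (by omega), if_neg (by omega)]

lemma entry_Rop {q p : ℕ} (M : Matrix (Fin q) (Fin p) ℕ) (i j : ℕ) (h : RCond M i j) (a b : ℕ) :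
    entry (Rop M i j) a b = if a = i ∧ b = j then 0 else
      if a = i ∧ b = j + 1 then entry M i j else entry M a b := by
  obtain ⟨h1, h2, -⟩ := id h
  by_cases hab : a < q ∧ b < p
  · have : entry (Rop M i j) a b = Rop M i j ⟨a, hab.1⟩ ⟨b, hab.2⟩ := by simp [entry, hab]
    rw [this, Rop, if_pos h]
    have h' : entry M a b = M ⟨a, hab.1⟩ ⟨b, hab.2⟩ := by simp [entry, hab]
    rw [h']
    rfl
  · have e : ∀ N : Matrix (Fin q) (Fin p) ℕ, entry N a b = 0 := by
      intro N; unfold entry; rw [dif_neg hab]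
    rw [e, e, if_neg (by omega), if_neg (by omega)]

/-- abstract effect of moving the entry `f` between two lines of a matrix -/
lemma line_blocks (e e' : ℕ → ℕ → ℕ) (i j : ℕ) (B B' : ℕ → Finset ℕ)
    (hB : ∀ i v, v ∈ B i ↔ v ≠ 0 ∧ ∃ j, e i j = v)
    (hB' : ∀ i v, v ∈ B' i ↔ v ≠ 0 ∧ ∃ j, e' i j = v)
    (h0 : e (i+1) j = 0) (hf : e i j ≠ 0)
    (he : ∀ a b, e' a b = if a = i ∧ b = j then 0 else
      if a = i + 1 ∧ b = j then e i j else e a b)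
    (inj : ∀ i₁ j₁ i₂ j₂, e i₁ j₁ ≠ 0 → e i₂ j₂ ≠ 0 →
      e i₁ j₁ = e i₂ j₂ → i₁ = i₂ ∧ j₁ = j₂) :
    (∀ k, k ≠ i → k ≠ i + 1 → B' k = B k) ∧ e i j ∉ B' i ∧ e i j ∉ B (i+1) ∧
      B i = insert (e i j) (B' i) ∧ B' (i+1) = insert (e i j) (B (i+1)) := by
  refine ⟨?_, ?_, ?_, ?_, ?_⟩
  · intro k hk hk'
    ext v
    rw [hB, hB']
    simp [he, hk, hk']
  · rw [hB']
    rintro ⟨-, b, hb⟩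
    rw [he] at hb
    by_cases hbj : b = j
    · simp [hbj] at hb; exact hf hb.symm
    · simp [hbj] at hb
      exact hbj (inj _ _ _ _ (hb ▸ hf) hf hb).2
  · rw [hB]
    rintro ⟨-, b, hb⟩
    have := (inj _ _ _ _ (hb ▸ hf) hf hb).1
    omega
  · ext v
    rw [Finset.mem_insert, hB, hB']
    constructor
    · rintro ⟨hv, b, hb⟩
      by_cases hbj : b = j
      · left; rw [← hb, hbj]
      · right; exact ⟨hv, b, by rw [he]; simp [hbj, hb]⟩
    · rintro (rfl | ⟨hv, b, hb⟩)
      · exact ⟨hf, j, rfl⟩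
      · rw [he] at hb
        by_cases hbj : b = j
        · simp [hbj] at hb; exact absurd hb.symm hv
        · simp [hbj] at hb; exact ⟨hv, b, hb⟩
  · ext v
    rw [Finset.mem_insert, hB, hB']
    constructor
    · rintro ⟨hv, b, hb⟩
      rw [he] at hb
      by_cases hbj : b = j
      · simp [hbj] at hb; left; exact hb.symm
      · simp [hbj] at hb; right; exact ⟨hv, b, hb⟩
    · rintro (rfl | ⟨hv, b, hb⟩)
      · exact ⟨hf, j, by rw [he]; simp⟩
      · have hbj : b ≠ j := by rintro rfl; exact hv (hb ▸ h0)
        exact ⟨hv, b, by rw [he]; simp [hbj, hb]⟩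

/-- the transversal lines keep their sets of nonzero entries -/
lemma cross_blocks (e e' : ℕ → ℕ → ℕ) (i j : ℕ) 
    (h0 : e (i+1) j = 0)
    (he : ∀ a b, e' a b = if a = i ∧ b = j then 0 else
      if a = i + 1 ∧ b = j then e i j else e a b) (b v : ℕ) (hv : v ≠ 0) :
    (∃ a, e' a b = v) ↔ ∃ a, e a b = v := by
  constructor
  · rintro ⟨a, ha⟩
    rw [he] at ha
    split_ifs at ha with h1 h2
    · exact absurd ha.symm hv
    · exact ⟨i, by rw [h2.2, ha]⟩
    · exact ⟨a, ha⟩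
  · rintro ⟨a, ha⟩
    by_cases h1 : a = i ∧ b = j
    · obtain ⟨rfl, rfl⟩ := h1
      exact ⟨a + 1, by rw [he]; simp [ha]⟩
    · by_cases h2 : a = i + 1 ∧ b = j
      · obtain ⟨rfl, rfl⟩ := h2
        exact absurd (ha.symm.trans h0) hv
      · exact ⟨a, by rw [he, if_neg h1, if_neg h2, ha]⟩

end SU

namespace SU

/-- Let `F` be a configuration matrix derived from a step matrix `E`.
(i) If `D_{i,j}` acts nontrivially on `F` and `F' = D_{i,j}F` is again a configuration
matrix derived from `E`, then `csgn(F')·csgn(F) = −(−1)^e` with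
`e = #{y ∈ V'_{i+1} : y > f'_{i+1,j}} + #{y ∈ V_i : y < f_{i,j}}`.
(ii) If `R_{i,j}` acts nontrivially on `F` and `F'' = R_{i,j}F` is again a configuration
matrix derived from `E`, then `csgn(F'')·csgn(F) = −(−1)^{e'}` with
`e' = #{y ∈ U_j : y > f_{i,j}} + #{y ∈ U''_{j+1} : y < f''_{i,j+1}}`.
(Indices of matrix positions are 0-based here; `V_i` denotes `rowBlock F i`, the set of
nonzero entries of the row of position `(i, ·)`, and `U_j` denotes `colBlock F j`.) -/
theorem statement5 {q p : ℕ} (E F : Matrix (Fin q) (Fin p) ℕ)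
    (hE : IsStepMatrix E) (hF : IsOrderedMatrix F) (hd : DerivedFrom E F) :
    (∀ i j, Dop F i j ≠ F → IsOrderedMatrix (Dop F i j) → DerivedFrom E (Dop F i j) →
      csgnFrom E (Dop F i j) * csgnFrom E F =
        -(-1 : ℤ) ^
          (((rowBlock (Dop F i j) (i+1)).filter
              (fun y => entry (Dop F i j) (i+1) j < y)).card +
           ((rowBlock F i).filter (fun y => y < entry F i j)).card)) ∧
    (∀ i j, Rop F i j ≠ F → IsOrderedMatrix (Rop F i j) → DerivedFrom E (Rop F i j) →
      csgnFrom E (Rop F i j) * csgnFrom E F =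
        -(-1 : ℤ) ^
          (((colBlock F j).filter (fun y => entry F i j < y)).card +
           ((colBlock (Rop F i j) (j+1)).filter
              (fun y => y < entry (Rop F i j) i (j+1))).card)) := by
  obtain ⟨-, -, -, -, -, inj, -, -⟩ := hF
  constructor
  · intro i j hne _ _
    have hD : DCond F i j := by
      by_contra hc
      exact hne (by rw [Dop, if_neg hc])
    have he := entry_Dop F i j hD
    obtain ⟨h1, h2, h3, h4, -⟩ := id hD
    obtain ⟨b1, b2, b3, b4, b5⟩ := line_blocks (entry F) (entry (Dop F i j)) i j
      (rowBlock F) (rowBlock (Dop F i j)) (mem_rowBlock F) (mem_rowBlock _) h3 h4 he inj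
    have hc : colFace (Dop F i j) = colFace F := by
      unfold colFace
      apply List.map_congr_left
      intro b _
      ext v
      rw [mem_colBlock, mem_colBlock]
      exact and_congr_right fun hv => cross_blocks _ _ i j h3 he b v hv
    have h5 : entry (Dop F i j) (i+1) j = entry F i j := by rw [he]; simp
    rw [csgnFrom_mul, hc, sgn1_sq, mul_one, h5]
    exact move_row _ _ q i _ h1 b1 b2 b3 b4 b5
  · intro i j hne _ _
    have hD : RCond F i j := by
      by_contra hc
      exact hne (by rw [Rop, if_neg hc])
    have he := entry_Rop F i j hD
    obtain ⟨h1, h2, h3, h4, -⟩ := id hD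
    have he' : ∀ a b, (fun x y => entry (Rop F i j) y x) a b = if a = j ∧ b = i then 0 else
        if a = j + 1 ∧ b = i then (fun x y => entry F y x) j i
        else (fun x y => entry F y x) a b := by
      intro a b
      simp only [he, and_comm]
    obtain ⟨b1, b2, b3, b4, b5⟩ := line_blocks (fun x y => entry F y x)
      (fun x y => entry (Rop F i j) y x) j i
      (colBlock F) (colBlock (Rop F i j)) (mem_colBlock F) (mem_colBlock _) h3 h4 he'
      (fun a b c d x y z => (inj _ _ _ _ x y z).symm)
    have hc : rowFace (Rop F i j) = rowFace F := by
      unfold rowFace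
      congr 1
      apply List.map_congr_left
      intro b _
      ext v
      rw [mem_rowBlock, mem_rowBlock]
      exact and_congr_right fun hv => cross_blocks (fun x y => entry F y x) 
        (fun x y => entry (Rop F i j) y x) j i h3 he' b v hv
    have h5 : entry (Rop F i j) i (j+1) = entry F i j := by rw [he]; simp
    rw [csgnFrom_mul, hc, sgn1_sq, one_mul, h5]
    exact move_col _ _ p j _ h1 b1 b2 b3 b4 b5

end SU
end
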